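/- For the regular embedding A_1 → B_2 determined by the A_1 simple root β = α_1 + 2α_2 (where α_1 is the long and α_2 the short simple root of B_2): the set of positive roots of B_2 orthogonal to β is Δ_{a⊥}⁺ = {α_1}; the defect vanishes, D_{a⊥} = 0; and the fan expansion ∏_{α ∈ Δ⁺∖Δ_{a⊥}⁺} (1 − e^{−π_a α})^{mult(α) − mult_a(π_a α)} equals (1 − e^{−ω})² = 1 − 2e^{−ω} + e^{−2ω}, where ω = β/2 is the fundamental weight of the embedded A_1. Consequently γ₀ = 0 with s(γ₀) = −1, and the injection fan is Γ_{A_1→B_2} = {(ω; 2), (2ω; −1)}, the second entries being the values of the sign function s. -/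

import Mathlib

/-!
STATEMENT 9.  For the regular embedding `A_1 → B_2` determined by the `A_1` simple root
`β = α_1 + 2α_2` (`α_1` the long, `α_2` the short simple root of `B_2`): the positive
roots of `B_2` orthogonal to `β` are `Δ_{a⊥}⁺ = {α_1}`; the defect vanishes,
`D_{a⊥} = ρ_{a⊥} − π_{a⊥}(ρ) = 0`; the fan expansion
`∏_{α∈Δ⁺∖Δ_{a⊥}⁺} (1−e^{−π_a α})^{mult(α)−mult_a(π_a α)}` equals
`(1−e^{−ω})² = 1 − 2e^{−ω} + e^{−2ω}` with `ω = β/2` the fundamental weight of the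
embedded `A_1`; consequently `γ₀ = 0`, `s(γ₀) = −1`, and the injection fan is
`Γ_{A_1→B_2} = {(ω;2), (2ω;−1)}` (second entries the values of the sign function `s`).

The weight space is `ℝ × ℝ` with the standard euclidean product; `α_1 = (1,−1)`,
`α_2 = (0,1)`, so `β = (1,1)`; the group algebra is `AddMonoidAlgebra ℤ (ℝ × ℝ)`.
-/

noncomputable section

/-- The coefficient of `e^{-x}` in `∑ s(γ) e^{-γ}` is `s(x)`. -/
theorem coeff_neg_sum_smul_single_neg {G : Type*} [AddCommGroup G] (s : G →₀ ℤ) (x : G) :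
    (s.sum fun γ c =>
      c • (AddMonoidAlgebra.single (-γ) (1 : ℤ) : AddMonoidAlgebra ℤ G)).coeff (-x) = s x := by
  classical
  simp +contextual [Finsupp.sum, Finsupp.single_apply, eq_comm]

/-- If `1 - 2e^{-ω} + e^{-2ω} = -∑ s(γ) e^{-γ}`, then `s` takes the values `-1, 2, -1` at
`0, ω, 2ω`. -/
theorem eq_single_add_single_add_single_of_eq_neg_sum {G : Type*} [AddCommGroup G]
    (s : G →₀ ℤ) (ω : G)
    (h : (1 : AddMonoidAlgebra ℤ G) - 2 • AddMonoidAlgebra.single (-ω) (1 : ℤ)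
        + AddMonoidAlgebra.single (-(2 • ω)) (1 : ℤ)
      = -(s.sum fun γ c => c • (AddMonoidAlgebra.single (-γ) (1 : ℤ) : AddMonoidAlgebra ℤ G))) :
    s = Finsupp.single 0 (-1) + Finsupp.single ω 2 + Finsupp.single (2 • ω) (-1) := by
  classical
  ext x
  rw [← coeff_neg_sum_smul_single_neg s x, ← neg_eq_iff_eq_neg.mpr h, AddMonoidAlgebra.one_def]
  simp only [AddMonoidAlgebra.coeff_neg, AddMonoidAlgebra.coeff_add, AddMonoidAlgebra.coeff_sub,
    AddMonoidAlgebra.coeff_smul, AddMonoidAlgebra.coeff_single, Finsupp.neg_apply,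
    Finsupp.add_apply, Finsupp.sub_apply, Finsupp.smul_apply, Finsupp.single_apply, neg_inj,
    zero_eq_neg, eq_comm (a := x)]
  split_ifs <;> simp

/-- Support and values of a sum of three point masses at distinct points. -/
theorem support_and_apply_single_add_single_add_single {X : Type*} {a b c : X} {k l m : ℤ}
    (hba : b ≠ a) (hca : c ≠ a) (hcb : c ≠ b) (hk : k ≠ 0) (hl : l ≠ 0) (hm : m ≠ 0) :
    let s := Finsupp.single a k + Finsupp.single b l + Finsupp.single c m
    (↑s.support : Set X) = {a, b, c} ∧ s a = k ∧ s b = l ∧ s c = m := by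
  classical
  intro s
  have ha : s a = k := by simp [s, hba, hca]
  have hb : s b = l := by simp [s, hba.symm, hcb]
  have hc : s c = m := by simp [s, hca.symm, hcb.symm]
  refine ⟨?_, ha, hb, hc⟩
  ext x
  simp only [Finset.mem_coe, Finsupp.mem_support_iff, Set.mem_insert_iff, Set.mem_singleton_iff]
  constructor
  · intro hx
    by_contra! hne
    exact hx (by simp [s, hne.1.symm, hne.2.1.symm, hne.2.2.symm])
  · rintro (rfl | rfl | rfl)
    exacts [ha ▸ hk, hb ▸ hl, hc ▸ hm]

theorem A1_in_B2_injection_fan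
    [DecidableEq (ℝ × ℝ)]
    -- the euclidean inner product on the weight space of B_2
    (dot : (ℝ × ℝ) → (ℝ × ℝ) → ℝ)
    (hdot : dot = fun v w => v.1 * w.1 + v.2 * w.2)
    -- the simple roots of B_2 (α1 long, α2 short), the A_1 root β = α1 + 2α2 and its
    -- fundamental weight ω = β/2
    (α1 α2 β ω : ℝ × ℝ)
    (hα1 : α1 = (1, -1)) (hα2 : α2 = (0, 1))
    (hβ : β = α1 + 2 • α2) (hω : ω = (1/2 : ℝ) • β)
    -- the positive roots of B_2, all of multiplicity 1
    (Δplus : Finset (ℝ × ℝ))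
    (hΔ : Δplus = {α1, α2, α1 + α2, α1 + 2 • α2})
    (multg : (ℝ × ℝ) → ℕ) (hmultg : ∀ α ∈ Δplus, multg α = 1)
    -- the root multiplicities of the embedded A_1 (roots ±β)
    (multa : (ℝ × ℝ) → ℕ)
    (hmulta : multa = fun x => if x = β ∨ x = -β then 1 else 0)
    -- the Weyl vector of B_2, the Weyl vector of a⊥ = A_1 (root α1), and the
    -- orthogonal projections onto the weight spaces of a and a⊥
    (ρ ρperp : ℝ × ℝ)
    (hρ : ρ = (1/2 : ℝ) • (α1 + α2 + (α1 + α2) + (α1 + 2 • α2)))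
    (hρperp : ρperp = (1/2 : ℝ) • α1)
    (πa πperp : (ℝ × ℝ) → (ℝ × ℝ))
    (hπa : πa = fun x => (dot x β / dot β β) • β)
    (hπperp : πperp = fun x => (dot x α1 / dot α1 α1) • α1)
    -- the sign function s : ∏_{α∈Δ⁺∖Δ_{a⊥}⁺}(1−e^{−π_a α})^{mult−mult_a} = −Σ s(γ)e^{−γ}
    (s : (ℝ × ℝ) →₀ ℤ)
    (hs : (∏ α ∈ Δplus \ {α1},
        ((1 : AddMonoidAlgebra ℤ (ℝ × ℝ)) -
          AddMonoidAlgebra.single (-(πa α)) (1 : ℤ)) ^ (multg α - multa (πa α)))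
      = - (s.sum fun γ c =>
          c • (AddMonoidAlgebra.single (-γ) (1 : ℤ) : AddMonoidAlgebra ℤ (ℝ × ℝ)))) :
    -- (i) the positive roots of B_2 orthogonal to β are exactly {α1};
    {α : ℝ × ℝ | α ∈ Δplus ∧ dot α β = 0} = {α1} ∧
    -- (ii) the defect vanishes: D_{a⊥} = ρ_{a⊥} − π_{a⊥}(ρ) = 0;
    ρperp - πperp ρ = 0 ∧
    -- (iii) the fan expansion equals (1 − e^{−ω})² = 1 − 2e^{−ω} + e^{−2ω};
    (∏ α ∈ Δplus \ {α1},
        ((1 : AddMonoidAlgebra ℤ (ℝ × ℝ)) -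
          AddMonoidAlgebra.single (-(πa α)) (1 : ℤ)) ^ (multg α - multa (πa α)))
      = ((1 : AddMonoidAlgebra ℤ (ℝ × ℝ)) - AddMonoidAlgebra.single (-ω) (1 : ℤ)) ^ 2 ∧
    (∏ α ∈ Δplus \ {α1},
        ((1 : AddMonoidAlgebra ℤ (ℝ × ℝ)) -
          AddMonoidAlgebra.single (-(πa α)) (1 : ℤ)) ^ (multg α - multa (πa α)))
      = (1 : AddMonoidAlgebra ℤ (ℝ × ℝ))
          - 2 • AddMonoidAlgebra.single (-ω) (1 : ℤ)
          + AddMonoidAlgebra.single (-(2 • ω)) (1 : ℤ) ∧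
    -- (iv) hence Φ_{a⊂g} = supp s = {0, ω, 2ω} with γ₀ = 0, s(γ₀) = −1, and the
    -- injection fan Γ_{A_1→B_2} = {(ω;2), (2ω;−1)}
    (↑s.support : Set (ℝ × ℝ)) = {0, ω, 2 • ω} ∧
    s 0 = -1 ∧ s ω = 2 ∧ s (2 • ω) = -1 := by
  have hβ' : β = (1, 1) := by rw [hβ, hα1, hα2]; norm_num
  have hω' : ω = (1/2, 1/2) := by rw [hω, hβ']; norm_num
  have hsum : α1 + α2 = (1, 0) := by rw [hα1, hα2]; norm_num
  rw [← hβ, hsum] at hΔ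
  have hdiff : Δplus \ {α1} = {α2, (1, 0), β} := by
    rw [hΔ, hα1, hα2, hβ']
    ext ⟨x, y⟩
    simp only [Finset.mem_sdiff, Finset.mem_insert, Finset.mem_singleton, Prod.mk.injEq]
    grind
  have hπα2 : πa α2 = ω := by
    rw [hπa, hdot, hω', hβ', hα2]; norm_num
  have hπsum : πa (1, 0) = ω := by
    rw [hπa, hdot, hω', hβ']; norm_num
  have hπβ : πa β = β := by
    rw [hπa, hdot, hβ']; norm_num
  have hmω : multa ω = 0 := by
    rw [hmulta, hω', hβ']; norm_num
  have hmβ : multa β = 1 := by rw [hmulta]; simp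
  have hprod : (∏ α ∈ Δplus \ {α1},
        ((1 : AddMonoidAlgebra ℤ (ℝ × ℝ)) -
          AddMonoidAlgebra.single (-(πa α)) (1 : ℤ)) ^ (multg α - multa (πa α)))
      = ((1 : AddMonoidAlgebra ℤ (ℝ × ℝ)) - AddMonoidAlgebra.single (-ω) (1 : ℤ)) ^ 2 := by
    rw [hdiff, Finset.prod_insert (by rw [hα2, hβ']; norm_num),
      Finset.prod_insert (by rw [hβ']; norm_num), Finset.prod_singleton, hπα2, hπsum, hπβ,
      hmultg α2 (by simp [hΔ]), hmultg (1, 0) (by simp [hΔ]), hmultg β (by simp [hΔ]), hmω, hmβ]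
    ring
  have hexp : ((1 : AddMonoidAlgebra ℤ (ℝ × ℝ)) - AddMonoidAlgebra.single (-ω) (1 : ℤ)) ^ 2
      = (1 : AddMonoidAlgebra ℤ (ℝ × ℝ))
          - 2 • AddMonoidAlgebra.single (-ω) (1 : ℤ)
          + AddMonoidAlgebra.single (-(2 • ω)) (1 : ℤ) := by
    rw [sub_sq, AddMonoidAlgebra.single_pow, one_pow, one_pow, smul_neg, mul_one, two_mul,
      two_nsmul (AddMonoidAlgebra.single (-ω) (1 : ℤ))]
  have hval := eq_single_add_single_add_single_of_eq_neg_sum s ω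
    ((hprod.trans hexp).symm.trans hs)
  have h0ω : ω ≠ 0 := by rw [hω']; norm_num [Prod.ext_iff]
  have h02ω : 2 • ω ≠ 0 := by rw [hω']; norm_num [Prod.ext_iff]
  have hω2ω : 2 • ω ≠ ω := by rw [two_nsmul]; simpa using h0ω
  refine ⟨?_, ?_, hprod, hprod.trans hexp, ?_⟩
  · ext α
    simp only [hΔ, Set.mem_ofPred_eq, Finset.mem_insert, Finset.mem_singleton,
      Set.mem_singleton_iff]
    constructor
    · rintro ⟨rfl | rfl | rfl | rfl, h⟩
      · rfl
      all_goals norm_num [hdot, hα2, hβ'] at h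
    · rintro rfl
      exact ⟨Or.inl rfl, by norm_num [hdot, hα1, hβ']⟩
  · rw [hρperp, hπperp, hρ, hdot, hα1, hα2]; norm_num
  · rw [hval]
    exact support_and_apply_single_add_single_add_single h0ω h02ω hω2ω
      (by norm_num) (by norm_num) (by norm_num)
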